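/- Let T be a homeomorphism of a compact metric space X with infinite topological entropy h_top(T) = ∞, and fix m ∈ ℕ. Then for every N ∈ ℕ there exists δ > 0 such that C_m(F)·N ≤ (1/|F|) log spa(T,F,δ) for every finite F ⊂ ℤ. -/

import Mathlib

open Filter

variable {X : Type*} [MetricSpace X]

/-- `spaZ T F ε` : the minimal cardinality of a set `E ⊆ X` such that every `x ∈ X`
satisfies `max_{i ∈ F} dist (T^i x, T^i e) ≤ ε` for some `e ∈ E`, where the iterates
`T^i`, `i ∈ ℤ`, are powers of the homeomorphism `T`. -/
noncomputable def spaZ (T : X ≃ₜ X) (F : Finset ℤ) (ε : ℝ) : ℕ :=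
  sInf {k : ℕ | ∃ E : Finset X, E.card = k ∧
    ∀ x : X, ∃ e ∈ E, ∀ i ∈ F, dist ((T.toEquiv ^ i) x) ((T.toEquiv ^ i) e) ≤ ε}

/-- Topological entropy of a homeomorphism, via spanning sets:
`h_top(T) = lim_{ε→0⁺} limsup_n (1/n) log spa(T,{0,…,n−1},ε)`
(the limit as `ε → 0⁺` of the antitone-in-`ε` quantity is its supremum over `ε > 0`). -/
noncomputable def htopZ (T : X ≃ₜ X) : EReal :=
  ⨆ (ε : ℝ) (_ : 0 < ε),
    Filter.limsup
      (fun n : ℕ =>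
        ((Real.log (spaZ T (Finset.Icc 0 ((n : ℤ) - 1)) ε) / n : ℝ) : EReal))
      Filter.atTop

open Pointwise in
/-- `C_m(F) = |F + {0,…,m−1}| / |F|`. -/
noncomputable def Cm (m : ℕ) (F : Finset ℤ) : ℝ :=
  ((F + Finset.Icc (0 : ℤ) ((m : ℤ) - 1)).card : ℝ) / (F.card : ℝ)

open Pointwise in
/-- `F` has `m`-bounded gaps if `F + {0,…,m−1}` is an interval of integers. -/
def BoundedGaps (m : ℕ) (F : Finset ℤ) : Prop :=
  ∃ a b : ℤ, F + Finset.Icc (0 : ℤ) ((m : ℤ) - 1) = Finset.Icc a b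

/-! Take an `ε / 4`-net of `k` points and code each point of `X` by the open balls of a radius
`r ∈ (ε / 4, ε / 2)` around the net that contain it; points with the same code are `ε`-close. If the
code is forgotten within `δ` of the boundaries of these balls, then a code that is kept is shared by all
points `δ`-close to the given one, so an `(F, δ)`-spanning set bounds the number of partial words
seen along a translate of `F`, up to the `2 ^ |F|` choices of forgotten positions. Shearer's
inequality for the translates of `F` turns this into a bound for the partial words along a long
interval `{0, …, n - 1}`.

To recover the complete words, `k ^ 2` radii are chosen so far apart that a point is `δ`-close to
boundaries for at most `k` of them. Each orbit segment of length `n` is therefore close to the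
boundaries for some radius at no more than `n / k` times, and the `(2 ^ k) ^ (n / k) ≤ 2 ^ n` ways
of filling in its partial word cost only `log 2` of the entropy. Finally, uniform continuity of
`T^i` for `0 ≤ i < m` allows `F` to be replaced by `F + {0, …, m - 1}`. -/

section Shearer

lemma prod_rpow_le_sum_div_mul {ι : Type*} (s : Finset ι) {w z : ι → ℝ}
    (hw : ∀ i ∈ s, 0 ≤ w i) (hw1 : 1 ≤ ∑ i ∈ s, w i) (hz0 : ∀ i ∈ s, 0 ≤ z i)
    (hz1 : ∀ i ∈ s, z i ≤ 1) :
    ∏ i ∈ s, z i ^ w i ≤ ∑ i ∈ s, w i / (∑ j ∈ s, w j) * z i := by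
  have hW : 0 < ∑ j ∈ s, w j := one_pos.trans_le hw1
  have hw' (i) (hi : i ∈ s) : 0 ≤ w i / ∑ j ∈ s, w j := div_nonneg (hw i hi) hW.le
  calc ∏ i ∈ s, z i ^ w i
    _ ≤ ∏ i ∈ s, z i ^ (w i / ∑ j ∈ s, w j) :=
      Finset.prod_le_prod (fun i hi => Real.rpow_nonneg (hz0 i hi) _) fun i hi =>
        Real.rpow_le_rpow_of_exponent_ge' (hz0 i hi) (hz1 i hi) (hw' i hi)
          (div_le_self (hw i hi) hw1)
    _ ≤ ∑ i ∈ s, w i / (∑ j ∈ s, w j) * z i :=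
      Real.geom_mean_le_arith_mean_weighted s _ _ hw'
        (by rw [← Finset.sum_div, div_self hW.ne']) hz0

-- Hölder's inequality; a total weight above `1` is allowed because `f i j ≤ ∑ j ∈ t, f i j`.
theorem sum_prod_rpow_le_prod_sum_rpow {ι κ : Type*} (s : Finset ι) (t : Finset κ) {w : ι → ℝ}
    {f : ι → κ → ℝ} (hw : ∀ i ∈ s, 0 ≤ w i) (hw1 : 1 ≤ ∑ i ∈ s, w i)
    (hf : ∀ i ∈ s, ∀ j ∈ t, 0 ≤ f i j) :
    ∑ j ∈ t, ∏ i ∈ s, f i j ^ w i ≤ ∏ i ∈ s, (∑ j ∈ t, f i j) ^ w i := by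
  set W := ∑ i ∈ s, w i
  have hW : 0 < W := one_pos.trans_le hw1
  have hF (i) (hi : i ∈ s) : 0 ≤ ∑ j ∈ t, f i j := Finset.sum_nonneg (hf i hi)
  set p : ι → κ → ℝ := fun i j => f i j / ∑ j ∈ t, f i j
  have hp0 (i) (hi : i ∈ s) (j) (hj : j ∈ t) : 0 ≤ p i j := div_nonneg (hf i hi j hj) (hF i hi)
  have hp1 (i) (hi : i ∈ s) (j) (hj : j ∈ t) : p i j ≤ 1 :=
    div_le_one_of_le₀ (Finset.single_le_sum (hf i hi) hj) (hF i hi)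
  have hfp (i) (hi : i ∈ s) (j) (hj : j ∈ t) : f i j = (∑ j ∈ t, f i j) * p i j :=
    (mul_div_cancel_of_imp' fun h => (Finset.sum_eq_zero_iff_of_nonneg (hf i hi)).1 h j hj).symm
  have hp : ∑ j ∈ t, ∏ i ∈ s, p i j ^ w i ≤ 1 :=
    calc ∑ j ∈ t, ∏ i ∈ s, p i j ^ w i
      _ ≤ ∑ j ∈ t, ∑ i ∈ s, w i / W * p i j := Finset.sum_le_sum fun j hj =>
        prod_rpow_le_sum_div_mul s hw hw1 (fun i hi => hp0 i hi j hj) fun i hi => hp1 i hi j hj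
      _ = ∑ i ∈ s, w i / W * ∑ j ∈ t, p i j := by
        rw [Finset.sum_comm]
        simp only [Finset.mul_sum]
      _ ≤ ∑ i ∈ s, w i / W := by
        refine Finset.sum_le_sum fun i hi =>
          mul_le_of_le_one_right (div_nonneg (hw i hi) hW.le) ?_
        rw [← Finset.sum_div]
        exact div_self_le_one _
      _ = 1 := by rw [← Finset.sum_div, div_self hW.ne']
  calc ∑ j ∈ t, ∏ i ∈ s, f i j ^ w i
    _ = (∏ i ∈ s, (∑ j ∈ t, f i j) ^ w i) * ∑ j ∈ t, ∏ i ∈ s, p i j ^ w i := by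
      rw [Finset.mul_sum]
      refine Finset.sum_congr rfl fun j hj => ?_
      rw [← Finset.prod_mul_distrib]
      refine Finset.prod_congr rfl fun i hi => ?_
      rw [← Real.mul_rpow (hF i hi) (hp0 i hi j hj), ← hfp i hi j hj]
    _ ≤ ∏ i ∈ s, (∑ j ∈ t, f i j) ^ w i :=
      mul_le_of_le_one_right (Finset.prod_nonneg fun i hi => Real.rpow_nonneg (hF i hi) _) hp

variable {ι : Type*} {π : ι → Type*}

lemma ncard_image_restrict_insert_of_const [DecidableEq ι] {A : Set (∀ i, π i)} {a : ι} {c : π a}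
    (hA : ∀ w ∈ A, w a = c) (I : Finset ι) :
    ((insert a I).restrict '' A).ncard = (I.restrict '' A).ncard := by
  have hsub : I.restrict '' A = Finset.restrict₂ (Finset.subset_insert a I) ''
      ((insert a I).restrict '' A) := by
    rw [← Set.image_comp, Finset.restrict₂_comp_restrict]
  rw [hsub]
  refine (Set.InjOn.ncard_image ?_).symm
  rintro _ ⟨v, hv, rfl⟩ _ ⟨w, hw, rfl⟩ hvw
  ext ⟨i, hi⟩
  rcases Finset.mem_insert.1 hi with rfl | hi
  · exact (hA v hv).trans (hA w hw).symm
  · exact congrFun hvw ⟨i, hi⟩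

variable [∀ i, Finite (π i)]

lemma ncard_image_restrict_eq_sum_fiber (A : Set (∀ i, π i)) {S : Finset ι} {a : ι}
    [Fintype (π a)] (ha : a ∈ S) :
    (S.restrict '' A).ncard = ∑ c : π a, (S.restrict '' {w ∈ A | w a = c}).ncard := by
  classical
  have hfiber (c : π a) : S.restrict '' {w ∈ A | w a = c} =
      {v ∈ S.restrict '' A | v ⟨a, ha⟩ = c} := by
    ext v
    constructor
    · rintro ⟨w, ⟨hw, hc⟩, rfl⟩
      exact ⟨⟨w, hw, rfl⟩, hc⟩
    · rintro ⟨⟨w, hw, rfl⟩, hc⟩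
      exact ⟨w, ⟨hw, hc⟩, rfl⟩
  have hfin := (S.restrict '' A).toFinite
  rw [Set.ncard_eq_toFinset_card _ hfin,
    Finset.card_eq_sum_card_fiberwise (f := fun v => v ⟨a, ha⟩) (t := Finset.univ) (by simp)]
  refine Finset.sum_congr rfl fun c _ => ?_
  rw [hfiber, ← Set.ncard_coe_finset]
  congr 1
  ext v
  simp

lemma sum_prod_rpow_ncard_fiber_le {τ : Type*} {a : ι} [Fintype (π a)] (J : Finset τ)
    (S : τ → Finset ι) [DecidablePred fun j => a ∈ S j] {w : τ → ℝ} (hw : ∀ j ∈ J, 0 ≤ w j)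
    (ha : 1 ≤ ∑ j ∈ J with a ∈ S j, w j) (A : Set (∀ i, π i)) :
    ∑ c : π a, ∏ j ∈ J, (((S j).restrict '' {v ∈ A | v a = c}).ncard : ℝ) ^ w j ≤
      ∏ j ∈ J, (((S j).restrict '' A).ncard : ℝ) ^ w j := by
  set N : τ → ℝ := fun j => ((S j).restrict '' A).ncard
  set n : τ → π a → ℝ := fun j c => ((S j).restrict '' {v ∈ A | v a = c}).ncard
  have hn (j : τ) (c : π a) : n j c ≤ N j :=
    Nat.cast_le.2 (Set.ncard_le_ncard (Set.image_mono (Set.sep_subset _ _)) (Set.toFinite _))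
  have hsum (j : τ) (hj : a ∈ S j) : ∑ c, n j c = N j :=
    (Nat.cast_sum _ _).symm.trans (congrArg _ (ncard_image_restrict_eq_sum_fiber A hj).symm)
  calc ∑ c, ∏ j ∈ J, n j c ^ w j
    _ ≤ ∑ c, (∏ j ∈ J with a ∈ S j, n j c ^ w j) * ∏ j ∈ J with a ∉ S j, N j ^ w j := by
      refine Finset.sum_le_sum fun c _ => ?_
      rw [← Finset.prod_filter_mul_prod_filter_not J fun j => a ∈ S j]
      gcongr with j hj
      · exact hw j (Finset.mem_filter.1 hj).1
      · exact hn j c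
    _ ≤ (∏ j ∈ J with a ∈ S j, (∑ c, n j c) ^ w j) * ∏ j ∈ J with a ∉ S j, N j ^ w j := by
      rw [← Finset.sum_mul]
      gcongr
      exact sum_prod_rpow_le_prod_sum_rpow _ _ (fun j hj => hw j (Finset.mem_filter.1 hj).1) ha
        fun j _ c _ => Nat.cast_nonneg _
    _ = (∏ j ∈ J with a ∈ S j, N j ^ w j) * ∏ j ∈ J with a ∉ S j, N j ^ w j := by
      congr 1
      exact Finset.prod_congr rfl fun j hj => by rw [hsum j (Finset.mem_filter.1 hj).2]
    _ = ∏ j ∈ J, N j ^ w j := Finset.prod_filter_mul_prod_filter_not J _ _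

-- Shearer's inequality for a fractional cover, in its counting form.
theorem ncard_image_restrict_le_prod_rpow {τ : Type*} [DecidableEq ι] (I : Finset ι)
    (J : Finset τ) (S : τ → Finset ι) {w : τ → ℝ} (hw : ∀ j ∈ J, 0 ≤ w j)
    (hcover : ∀ i ∈ I, 1 ≤ ∑ j ∈ J with i ∈ S j, w j) (A : Set (∀ i, π i)) :
    ((I.restrict '' A).ncard : ℝ) ≤ ∏ j ∈ J, (((S j).restrict '' A).ncard : ℝ) ^ w j := by
  induction I using Finset.induction_on generalizing A with
  | empty =>
    rcases A.eq_empty_or_nonempty with rfl | hA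
    · simpa using Finset.prod_nonneg fun j _ => Real.zero_rpow_nonneg (w j)
    · calc (((∅ : Finset ι).restrict '' A).ncard : ℝ)
        _ ≤ 1 := by exact_mod_cast Set.ncard_le_one_of_subsingleton _
        _ ≤ ∏ j ∈ J, (((S j).restrict '' A).ncard : ℝ) ^ w j := by
          refine Finset.one_le_prod fun j hj => Real.one_le_rpow ?_ (hw j hj)
          exact_mod_cast (hA.image _).ncard_pos
  | insert a I _ ih =>
    have := Fintype.ofFinite (π a)
    set fib : π a → Set (∀ i, π i) := fun c => {v ∈ A | v a = c}
    calc (((insert a I).restrict '' A).ncard : ℝ)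
      _ = ∑ c, (((insert a I).restrict '' fib c).ncard : ℝ) := by
        exact_mod_cast ncard_image_restrict_eq_sum_fiber A (Finset.mem_insert_self a I)
      _ = ∑ c, ((I.restrict '' fib c).ncard : ℝ) :=
        Finset.sum_congr rfl fun c _ => congrArg _ <|
          ncard_image_restrict_insert_of_const (fun v (hv : v ∈ fib c) => hv.2) I
      _ ≤ ∑ c, ∏ j ∈ J, (((S j).restrict '' fib c).ncard : ℝ) ^ w j :=
        Finset.sum_le_sum fun c _ =>
          ih (fun i hi => hcover i (Finset.mem_insert_of_mem hi)) (fib c)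
      _ ≤ ∏ j ∈ J, (((S j).restrict '' A).ncard : ℝ) ^ w j :=
        sum_prod_rpow_ncard_fiber_le J S hw (hcover a (Finset.mem_insert_self a I)) A

open Pointwise in
theorem ncard_image_restrict_pow_card_le {G κ : Type*} [AddCommGroup G] [DecidableEq G] [Finite κ]
    (A : Set (G → κ)) (I F : Finset G) {M : ℕ}
    (hM : ∀ t : G, ((t +ᵥ F).restrict '' A).ncard ≤ M) :
    (I.restrict '' A).ncard ^ F.card ≤ M ^ (I - F).card := by
  rcases F.eq_empty_or_nonempty with rfl | hF
  · simp
  have hcover (i) (hi : i ∈ I) : F.card ≤ {t ∈ I - F | i ∈ t +ᵥ F}.card := by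
    refine Finset.card_le_card_of_injOn (fun f => i - f) (fun f hf => ?_) (by simp)
    simp only [Finset.coe_filter, Set.mem_ofPred_eq]
    exact ⟨Finset.sub_mem_sub hi hf, Finset.mem_vadd_finset.2 ⟨f, hf, sub_add_cancel i f⟩⟩
  have key := ncard_image_restrict_le_prod_rpow I (I - F) (fun t => t +ᵥ F)
    (w := fun _ => (F.card : ℝ)⁻¹) (fun _ _ => by positivity) (fun i hi => by
      rw [Finset.sum_const, nsmul_eq_mul, ← div_eq_mul_inv, one_le_div (by positivity)]
      exact_mod_cast hcover i hi) A
  refine Nat.cast_le (α := ℝ).1 ?_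
  push_cast
  calc ((I.restrict '' A).ncard : ℝ) ^ F.card
    _ ≤ (∏ t ∈ I - F, (((t +ᵥ F).restrict '' A).ncard : ℝ) ^ (F.card : ℝ)⁻¹) ^ F.card := by gcongr
    _ = ∏ t ∈ I - F, (((t +ᵥ F).restrict '' A).ncard : ℝ) := by
      rw [← Finset.prod_pow]
      exact Finset.prod_congr rfl fun t _ =>
        Real.rpow_inv_natCast_pow (Nat.cast_nonneg _) hF.card_ne_zero
    _ ≤ M ^ (I - F).card := by
      refine (Finset.prod_le_prod (fun _ _ => Nat.cast_nonneg _) fun t _ => ?_).trans_eq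
        (Finset.prod_const _)
      exact_mod_cast hM t

end Shearer

section Averaging

lemma exists_card_mul_card_filter_le {α β : Type*} {s : Finset α} (hs : s.Nonempty)
    (t : Finset β) (r : α → β → Prop) [∀ a b, Decidable (r a b)] {m : ℕ}
    (hm : ∀ b ∈ t, {a ∈ s | r a b}.card ≤ m) :
    ∃ a ∈ s, s.card * {b ∈ t | r a b}.card ≤ m * t.card := by
  refine Finset.exists_le_of_sum_le hs ?_
  calc ∑ a ∈ s, s.card * {b ∈ t | r a b}.card
    _ = s.card * ∑ b ∈ t, {a ∈ s | r a b}.card := by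
      rw [← Finset.mul_sum]
      exact congrArg _ (Finset.sum_card_bipartiteAbove_eq_sum_card_bipartiteBelow r)
    _ ≤ s.card * (t.card * m) := by gcongr; exact Finset.sum_le_card_nsmul _ _ _ hm
    _ = ∑ _a ∈ s, m * t.card := by rw [Finset.sum_const, smul_eq_mul, mul_comm m]

lemma exists_finset_card_eq_ncard_image {α β : Type*} [Finite β] (g : α → β) (A : Set α) :
    ∃ E : Finset α, E.card = (g '' A).ncard ∧ ∀ x ∈ A, ∃ e ∈ E, g e = g x := by
  obtain ⟨E, -, hE⟩ := Set.exists_subset_bijOn A g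
  have hfin : E.Finite := hE.finite_iff_finite.2 (Set.toFinite _)
  refine ⟨hfin.toFinset, ?_, fun x hx => ?_⟩
  · rw [← Set.ncard_eq_toFinset_card E hfin, ← hE.image_eq, hE.injOn.ncard_image]
  · obtain ⟨e, he, hex⟩ := hE.surjOn (Set.mem_image_of_mem g hx)
    exact ⟨e, hfin.mem_toFinset.2 he, hex⟩

end Averaging

section Words

variable {ι κ α : Type*}

/-- The words obtained from a partial word `v` by filling in its unspecified letters `none`. -/
def completions (v : ι → Option κ) : Set (ι → κ) := {l | ∀ i, ∀ a ∈ v i, l i = a}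

lemma ncard_completions_le [Finite ι] [Finite κ] (v : ι → Option κ) :
    (completions v).ncard ≤ Nat.card κ ^ Nat.card {i // v i = none} := by
  rw [← Nat.card_fun, ← Set.ncard_univ]
  refine Set.ncard_le_ncard_of_injOn (fun l i => l i) (fun _ _ => Set.mem_univ _) ?_
  intro l hl l' hl' h
  funext i
  cases hv : v i with
  | none => exact congrFun h ⟨i, hv⟩
  | some a => exact (hl i a hv).trans (hl' i a hv).symm

lemma ncard_le_ncard_mul_pow_of_completions [Finite ι] [Finite κ] [Nonempty κ]
    {L : Set (ι → κ)} {V : Set (ι → Option κ)} {b : ℕ}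
    (hL : ∀ l ∈ L, ∃ v ∈ V, l ∈ completions v) (hV : ∀ v ∈ V, Nat.card {i // v i = none} ≤ b) :
    L.ncard ≤ V.ncard * Nat.card κ ^ b := by
  have hfin := V.toFinite
  calc L.ncard
    _ ≤ (⋃ v ∈ hfin.toFinset, completions v).ncard := by
      refine Set.ncard_le_ncard (fun l hl => ?_) (Set.toFinite _)
      simpa using hL l hl
    _ ≤ ∑ v ∈ hfin.toFinset, (completions v).ncard := Finset.set_ncard_biUnion_le _ _
    _ ≤ V.ncard * Nat.card κ ^ b := by
      rw [Set.ncard_eq_toFinset_card V hfin]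
      refine Finset.sum_le_card_nsmul _ _ _ fun v hv => (ncard_completions_le v).trans ?_
      exact Nat.pow_le_pow_right Nat.card_pos (hV v (hfin.mem_toFinset.1 hv))

/-- The bi-infinite word recording the values of the coding `f` along the orbit of `x`. -/
def itinerary (σ : Equiv.Perm α) (f : α → κ) (x : α) : ℤ → κ := fun i => f ((σ ^ i) x)

open scoped Classical in
/-- The coding `f` with its value forgotten (replaced by `none`) at the points of `B`. -/
noncomputable def eraseOn (f : α → κ) (B : Set α) (x : α) : Option κ :=
  if x ∈ B then none else some (f x)

lemma eraseOn_eq_none_iff {f : α → κ} {B : Set α} {x : α} : eraseOn f B x = none ↔ x ∈ B := by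
  simp [eraseOn]

lemma eq_of_mem_eraseOn {f : α → κ} {B : Set α} {x : α} {a : κ} (h : a ∈ eraseOn f B x) :
    f x = a := by
  unfold eraseOn at h
  split_ifs at h
  · simp at h
  · simpa using h

open scoped Classical in
lemma ncard_itinerary_le_ncard_eraseOn_mul_pow [Finite κ] [Nonempty κ] (σ : Equiv.Perm α)
    (f : α → κ) (B : Set α) (I : Finset ℤ) {A : Set α} {b : ℕ}
    (hb : ∀ x ∈ A, {i ∈ I | (σ ^ i) x ∈ B}.card ≤ b) :
    (I.restrict '' (itinerary σ f '' A)).ncard ≤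
      (I.restrict '' (itinerary σ (eraseOn f B) '' A)).ncard * Nat.card κ ^ b := by
  apply ncard_le_ncard_mul_pow_of_completions
  · rintro _ ⟨_, ⟨x, hx, rfl⟩, rfl⟩
    exact ⟨_, ⟨_, ⟨x, hx, rfl⟩, rfl⟩, fun i a ha =>
      eq_of_mem_eraseOn (f := f) (B := B) (x := (σ ^ (i : ℤ)) x) ha⟩
  · rintro _ ⟨_, ⟨x, hx, rfl⟩, rfl⟩
    refine le_trans (Nat.le_of_eq ?_) (hb x hx)
    simp only [Finset.restrict_def, itinerary, eraseOn_eq_none_iff]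
    rw [Nat.card_congr (Equiv.subtypeSubtypeEquivSubtypeInter (· ∈ I) fun i => (σ ^ i) x ∈ B)]
    exact Nat.subtype_card _ (by simp)

end Words

section BallCode

variable {Y : Type*} [PseudoMetricSpace Y] {t : Finset Y} {r δ : ℝ} {x y : Y}

/-- The coding of a point by the set of centres in `t` at distance less than `r` from it. -/
def ballCode (t : Finset Y) (r : ℝ) (x : Y) : Set t := {c | dist x c < r}

/-- The points close to the boundary of one of the balls of radius `r` with centre in `t`. -/
def ballBoundary (t : Finset Y) (r δ : ℝ) : Set Y := {x | ∃ c ∈ t, |dist x c - r| ≤ δ}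

lemma dist_lt_of_ballCode_eq (hx : ∃ c ∈ t, dist x c < r)
    (h : ballCode t r x = ballCode t r y) : dist x y < 2 * r := by
  obtain ⟨c, hc, hxc⟩ := hx
  have hyc : dist y c < r := (Set.ext_iff.1 h ⟨c, hc⟩).1 hxc
  linarith [dist_triangle_right x y c]

lemma ballCode_eq_of_dist_le (hx : x ∉ ballBoundary t r δ) (hxy : dist x y ≤ δ) :
    ballCode t r x = ballCode t r y := by
  ext ⟨c, hc⟩
  have hgap : δ < |dist x c - r| := not_le.1 fun h => hx ⟨c, hc, h⟩
  have hdist : |dist x c - dist y c| ≤ δ := (abs_dist_sub_le x y c).trans hxy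
  change dist x c < r ↔ dist y c < r
  grind

open scoped Classical in
lemma card_filter_mem_ballBoundary_le (x : Y) {s : Finset ℝ}
    (hs : (s : Set ℝ).Pairwise fun r r' => 2 * δ < dist r r') :
    {r ∈ s | x ∈ ballBoundary t r δ}.card ≤ t.card := by
  have : Nonempty Y := ⟨x⟩
  choose! c hct hc using fun r (h : x ∈ ballBoundary t r δ) => h
  refine Finset.card_le_card_of_injOn c (fun r hr => hct r (Finset.mem_filter.1 hr).2) ?_
  intro r hr r' hr' hrr'
  rw [Finset.mem_coe, Finset.mem_filter] at hr hr'
  by_contra hne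
  have hsep := hs hr.1 hr'.1 hne
  have hclose := dist_triangle_left r r' (dist x (c r))
  have h1 : dist (dist x (c r)) r ≤ δ := hc r hr.2
  have h2 : dist (dist x (c r)) r' ≤ δ := hrr' ▸ hc r' hr'.2
  linarith

lemma exists_separated_radii {a b : ℝ} (hab : a < b) (n : ℕ) :
    ∃ (s : Finset ℝ) (δ : ℝ), s.card = n ∧ ↑s ⊆ Set.Ioo a b ∧ 0 < δ ∧
      (s : Set ℝ).Pairwise fun r r' => 2 * δ < dist r r' := by
  obtain ⟨s, hsub, hcard⟩ := (Set.Ioo_infinite hab).exists_subset_card_eq n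
  have hsep : ∀ᶠ δ : ℝ in nhdsWithin 0 (Set.Ioi 0), ∀ p ∈ s.offDiag, 2 * δ < dist p.1 p.2 := by
    refine (eventually_all_finset _).2 fun p hp => nhdsWithin_le_nhds ?_
    have hpos : 0 < dist p.1 p.2 := dist_pos.2 (Finset.mem_offDiag.1 hp).2.2
    filter_upwards [gt_mem_nhds (half_pos hpos)] with δ hδ
    linarith
  obtain ⟨δ, hδ, hδ0⟩ := (hsep.and self_mem_nhdsWithin).exists
  exact ⟨s, δ, hcard, hsub, hδ0, fun r hr r' hr' hne =>
    hδ (r, r') (Finset.mem_offDiag.2 ⟨hr, hr', hne⟩)⟩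

lemma exists_finset_forall_dist_lt [CompactSpace Y] {ε : ℝ} (hε : 0 < ε) :
    ∃ t : Finset Y, ∀ x, ∃ c ∈ t, dist x c < ε := by
  obtain ⟨t, -, hfin, hcover⟩ := finite_cover_balls_of_compact (isCompact_univ (X := Y)) hε
  exact ⟨hfin.toFinset, fun x => by simpa using hcover (Set.mem_univ x)⟩

open scoped Classical in
lemma exists_radii_ballCode [CompactSpace Y] [Nonempty Y] {ε : ℝ} (hε : 0 < ε) :
    ∃ (t : Finset Y) (s : Finset ℝ) (δ : ℝ), t.Nonempty ∧ s.card = t.card ^ 2 ∧ 0 < δ ∧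
      (∀ r ∈ s, ∀ x y, ballCode t r x = ballCode t r y → dist x y ≤ ε) ∧
      ∀ x, {r ∈ s | x ∈ ballBoundary t r δ}.card ≤ t.card := by
  obtain ⟨t, ht⟩ := exists_finset_forall_dist_lt (Y := Y) (ε := ε / 4) (by positivity)
  obtain ⟨s, δ, hscard, hsub, hδ, hsep⟩ :=
    exists_separated_radii (show ε / 4 < ε / 2 by linarith) (t.card ^ 2)
  obtain ⟨c, hc, -⟩ := ht (Classical.arbitrary Y)
  refine ⟨t, s, δ, ⟨c, hc⟩, hscard, hδ, fun r hr x y hxy => ?_,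
    fun x => card_filter_mem_ballBoundary_le x hsep⟩
  obtain ⟨c, hc, hxc⟩ := ht x
  obtain ⟨hlt, hgt⟩ := hsub hr
  linarith [dist_lt_of_ballCode_eq ⟨c, hc, hxc.trans hlt⟩ hxy]

end BallCode

section Spanning

/-- `E` is an `ε`-spanning set for the Bowen metric `max_{i ∈ F} dist (T^i x, T^i y)`; `spaZ T F ε`
is the minimal cardinality of such a set. -/
def IsSpanning (T : X ≃ₜ X) (F : Finset ℤ) (ε : ℝ) (E : Finset X) : Prop :=
  ∀ x : X, ∃ e ∈ E, ∀ i ∈ F, dist ((T.toEquiv ^ i) x) ((T.toEquiv ^ i) e) ≤ ε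

variable {ε : ℝ}

lemma spaZ_le_card {T : X ≃ₜ X} {F : Finset ℤ} {E : Finset X} (hE : IsSpanning T F ε E) :
    spaZ T F ε ≤ E.card :=
  Nat.sInf_le ⟨E, rfl, hE⟩

lemma continuous_toEquiv_zpow (T : X ≃ₜ X) (i : ℤ) : Continuous (T.toEquiv ^ i : Equiv.Perm X) := by
  let toPerm : (X ≃ₜ X) →* Equiv.Perm X :=
    { toFun := Homeomorph.toEquiv, map_one' := rfl, map_mul' := fun _ _ => rfl }
  have h : (T ^ i).toEquiv = T.toEquiv ^ i := map_zpow toPerm T i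
  exact h ▸ (T ^ i).continuous

variable [CompactSpace X]

lemma exists_forall_dist_zpow_le (T : X ≃ₜ X) (F : Finset ℤ) (hε : 0 < ε) :
    ∃ δ : ℝ, 0 < δ ∧ ∀ x y : X, dist x y ≤ δ →
      ∀ i ∈ F, dist ((T.toEquiv ^ i) x) ((T.toEquiv ^ i) y) ≤ ε := by
  have hunif : ∀ᶠ p : X × X in uniformity X,
      ∀ i ∈ F, dist ((T.toEquiv ^ i) p.1) ((T.toEquiv ^ i) p.2) ≤ ε :=
    (eventually_all_finset F).2 fun i _ =>
      CompactSpace.uniformContinuous_of_continuous (continuous_toEquiv_zpow T i)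
        (Metric.uniformity_basis_dist_le.mem_of_mem hε)
  obtain ⟨δ, hδ, h⟩ := Metric.uniformity_basis_dist_le.eventually_iff.1 hunif
  exact ⟨δ, hδ, fun x y hxy => h (x := (x, y)) hxy⟩

lemma exists_isSpanning_card_eq (T : X ≃ₜ X) (F : Finset ℤ) (hε : 0 < ε) :
    ∃ E : Finset X, E.card = spaZ T F ε ∧ IsSpanning T F ε E := by
  obtain ⟨δ, hδ, hT⟩ := exists_forall_dist_zpow_le T F hε
  obtain ⟨t, ht⟩ := exists_finset_forall_dist_lt (Y := X) hδ
  have hspan : IsSpanning T F ε t := fun x =>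
    let ⟨c, hc, hxc⟩ := ht x
    ⟨c, hc, hT x c hxc.le⟩
  exact Nat.sInf_mem (s := {k | ∃ E : Finset X, E.card = k ∧ IsSpanning T F ε E}) ⟨_, t, rfl, hspan⟩

lemma spaZ_pos [Nonempty X] (T : X ≃ₜ X) (F : Finset ℤ) (hε : 0 < ε) : 0 < spaZ T F ε := by
  obtain ⟨E, hcard, hE⟩ := exists_isSpanning_card_eq T F hε
  obtain ⟨e, he, -⟩ := hE (Classical.arbitrary X)
  exact hcard ▸ Finset.card_pos.2 ⟨e, he⟩

open Pointwise in
lemma exists_spaZ_add_le (T : X ≃ₜ X) (D : Finset ℤ) (hε : 0 < ε) :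
    ∃ δ : ℝ, 0 < δ ∧ ∀ F : Finset ℤ, spaZ T (F + D) ε ≤ spaZ T F δ := by
  obtain ⟨δ, hδ, hT⟩ := exists_forall_dist_zpow_le T D hε
  refine ⟨δ, hδ, fun F => ?_⟩
  obtain ⟨E, hcard, hE⟩ := exists_isSpanning_card_eq T F hδ
  refine hcard ▸ spaZ_le_card fun x => ?_
  obtain ⟨e, he, hxe⟩ := hE x
  refine ⟨e, he, fun k hk => ?_⟩
  obtain ⟨i, hi, j, hj, rfl⟩ := Finset.mem_add.1 hk
  simpa only [add_comm i j, zpow_add, Equiv.Perm.mul_apply] using hT _ _ (hxe i hi) j hj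

end Spanning

section Counting

variable {T : X ≃ₜ X} {ε δ : ℝ} {κ : Type*}

lemma exists_spaZ_le_card_mul_ncard [Finite κ] {ρ : Type*} {s : Finset ρ} (hs : s.Nonempty)
    {f : ρ → X → κ} (hf : ∀ r ∈ s, ∀ x y, f r x = f r y → dist x y ≤ ε) {A : ρ → Set X}
    (hA : ∀ x, ∃ r ∈ s, x ∈ A r) (I : Finset ℤ) :
    ∃ r ∈ s, spaZ T I ε ≤ s.card * (I.restrict '' (itinerary T.toEquiv (f r) '' A r)).ncard := by
  classical
  choose E hcard hE using fun r =>
    exists_finset_card_eq_ncard_image (fun x => I.restrict (itinerary T.toEquiv (f r) x)) (A r)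
  obtain ⟨r, hr, hmax⟩ := s.exists_max_image (fun r => (E r).card) hs
  have hspan : IsSpanning T I ε (s.biUnion E) := by
    intro x
    obtain ⟨q, hq, hxq⟩ := hA x
    obtain ⟨e, he, hxe⟩ := hE q x hxq
    exact ⟨e, Finset.mem_biUnion.2 ⟨q, hq, he⟩, fun i hi =>
      hf q hq _ _ (congrFun hxe ⟨i, hi⟩).symm⟩
  refine ⟨r, hr, ?_⟩
  rw [Set.image_image, ← hcard]
  exact (spaZ_le_card hspan).trans (Finset.card_biUnion_le_card_mul _ _ _ hmax)

open Pointwise in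
lemma ncard_image_restrict_vadd_range_itinerary_eraseOn_le {F : Finset ℤ} {E : Finset X}
    (hE : IsSpanning T F δ E) {f : X → κ} {B : Set X}
    (hf : ∀ x ∉ B, ∀ y, dist x y ≤ δ → f x = f y) (t : ℤ) :
    ((t +ᵥ F).restrict '' Set.range (itinerary T.toEquiv (eraseOn f B))).ncard ≤
      E.card * 2 ^ F.card := by
  classical
  set word : X × Finset ℤ → (t +ᵥ F : Finset ℤ) → Option κ := fun p i =>
    if (i : ℤ) - t ∈ p.2 then none else some (f ((T.toEquiv ^ ((i : ℤ) - t)) p.1))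
  have hsub : (t +ᵥ F).restrict '' Set.range (itinerary T.toEquiv (eraseOn f B)) ⊆
      word '' (E ×ˢ F.powerset : Finset (X × Finset ℤ)) := by
    rintro _ ⟨_, ⟨x, rfl⟩, rfl⟩
    obtain ⟨e, he, hxe⟩ := hE ((T.toEquiv ^ t) x)
    refine ⟨(e, {i ∈ F | (T.toEquiv ^ i) ((T.toEquiv ^ t) x) ∈ B}), ?_, ?_⟩
    · exact Finset.mk_mem_product he (Finset.mem_powerset.2 (Finset.filter_subset _ _))
    funext ⟨_, hti⟩
    obtain ⟨i, hi, rfl⟩ := Finset.mem_vadd_finset.1 hti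
    have horbit : (T.toEquiv ^ (t + i)) x = (T.toEquiv ^ i) ((T.toEquiv ^ t) x) := by
      rw [add_comm, zpow_add, Equiv.Perm.mul_apply]
    by_cases hB : (T.toEquiv ^ i) ((T.toEquiv ^ t) x) ∈ B
    · simp [word, itinerary, eraseOn, horbit, hi, hB]
    · simp [word, itinerary, eraseOn, horbit, hB, hf _ hB _ (hxe i hi)]
  calc ((t +ᵥ F).restrict '' Set.range (itinerary T.toEquiv (eraseOn f B))).ncard
    _ ≤ (word '' (E ×ˢ F.powerset : Finset (X × Finset ℤ))).ncard :=
      Set.ncard_le_ncard hsub ((Finset.finite_toSet _).image _)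
    _ ≤ (E ×ˢ F.powerset).card :=
      (Set.ncard_image_le (Finset.finite_toSet _)).trans_eq (Set.ncard_coe_finset _)
    _ = E.card * 2 ^ F.card := by rw [Finset.card_product, Finset.card_powerset]

variable [CompactSpace X] [Nonempty X]

lemma exists_spaZ_le_mul_ncard_range_itinerary_eraseOn (T : X ≃ₜ X) (hε : 0 < ε) :
    ∃ (δ : ℝ) (R : ℕ) (t : Finset X), 0 < δ ∧ 0 < R ∧ ∀ I : Finset ℤ, ∃ r : ℝ,
      spaZ T I ε ≤ R * 2 ^ I.card * (I.restrict '' Set.range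
        (itinerary T.toEquiv (eraseOn (ballCode t r) (ballBoundary t r δ)))).ncard := by
  classical
  obtain ⟨t, s, δ, ht, hscard, hδ, hcode, hbdry⟩ := exists_radii_ballCode (Y := X) hε
  have hk : 0 < t.card := ht.card_pos
  have hs : s.Nonempty := Finset.card_pos.1 (hscard ▸ by positivity)
  refine ⟨δ, t.card ^ 2, t, hδ, by positivity, fun I => ?_⟩
  set A : ℝ → Set X := fun r =>
    {x | {i ∈ I | (T.toEquiv ^ i) x ∈ ballBoundary t r δ}.card ≤ I.card / t.card}
  have hA (x : X) : ∃ r ∈ s, x ∈ A r := by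
    obtain ⟨r, hr, hxr⟩ := exists_card_mul_card_filter_le hs I
      (fun r i => (T.toEquiv ^ i) x ∈ ballBoundary t r δ) fun i _ => hbdry _
    rw [hscard, sq, mul_assoc, mul_le_mul_iff_right₀ hk] at hxr
    exact ⟨r, hr, (Nat.le_div_iff_mul_le hk).2 (mul_comm t.card _ ▸ hxr)⟩
  obtain ⟨r, -, hspa⟩ := exists_spaZ_le_card_mul_ncard (T := T) hs hcode hA I
  refine ⟨r, ?_⟩
  set v := itinerary T.toEquiv (eraseOn (ballCode t r) (ballBoundary t r δ))
  have hfill : Nat.card (Set t) ^ (I.card / t.card) ≤ 2 ^ I.card := by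
    rw [Nat.card_eq_fintype_card, Fintype.card_set, Fintype.card_coe, ← pow_mul]
    exact Nat.pow_le_pow_right two_pos (Nat.mul_div_le _ _)
  calc spaZ T I ε
    _ ≤ t.card ^ 2 * (I.restrict '' (itinerary T.toEquiv (ballCode t r) '' A r)).ncard :=
      hscard ▸ hspa
    _ ≤ t.card ^ 2 *
        ((I.restrict '' (v '' A r)).ncard * Nat.card (Set t) ^ (I.card / t.card)) :=
      Nat.mul_le_mul_left _ (ncard_itinerary_le_ncard_eraseOn_mul_pow _ _ _ I fun x hx => hx)
    _ ≤ t.card ^ 2 * ((I.restrict '' Set.range v).ncard * 2 ^ I.card) := by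
      gcongr
      · exact Set.toFinite _
      · exact Set.image_subset_range v _
    _ = t.card ^ 2 * 2 ^ I.card * (I.restrict '' Set.range v).ncard := by ring

open Pointwise in
theorem exists_spaZ_pow_card_le (T : X ≃ₜ X) (hε : 0 < ε) :
    ∃ (δ : ℝ) (R : ℕ), 0 < δ ∧ 0 < R ∧ ∀ I F : Finset ℤ,
      spaZ T I ε ^ F.card ≤
        (R * 2 ^ I.card) ^ F.card * (spaZ T F δ * 2 ^ F.card) ^ (I - F).card := by
  obtain ⟨δ, R, t, hδ, hR, hI⟩ := exists_spaZ_le_mul_ncard_range_itinerary_eraseOn T hε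
  refine ⟨δ, R, hδ, hR, fun I F => ?_⟩
  obtain ⟨r, hr⟩ := hI I
  obtain ⟨E, hcard, hE⟩ := exists_isSpanning_card_eq T F hδ
  grw [hr, mul_pow, ← hcard]
  refine Nat.mul_le_mul_left _ (ncard_image_restrict_pow_card_le _ I F fun i => ?_)
  exact ncard_image_restrict_vadd_range_itinerary_eraseOn_le hE
    (fun x hx y hxy => ballCode_eq_of_dist_le hx hxy) i

open Pointwise in
lemma exists_card_mul_log_spaZ_sub_le (T : X ≃ₜ X) (hε : 0 < ε) :
    ∃ δ C : ℝ, 0 < δ ∧ ∀ I F : Finset ℤ,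
      F.card * (Real.log (spaZ T I ε) - C - I.card * Real.log 2) ≤
        (I - F).card * (Real.log (spaZ T F δ) + F.card * Real.log 2) := by
  obtain ⟨δ, R, hδ, hR, h⟩ := exists_spaZ_pow_card_le T hε
  refine ⟨δ, Real.log R, hδ, fun I F => ?_⟩
  have hI := spaZ_pos T I hε
  have hF := spaZ_pos T F hδ
  have hlog := Real.log_le_log (by positivity) (Nat.cast_le (α := ℝ).2 (h I F))
  push_cast at hlog
  rw [Real.log_mul (by positivity) (by positivity), Real.log_pow, Real.log_pow, Real.log_pow,
    Real.log_mul (by positivity) (by positivity), Real.log_mul (by positivity) (by positivity),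
    Real.log_pow, Real.log_pow] at hlog
  linarith

end Counting

section Entropy

lemma frequently_lt_log_spaZ_of_lt_htopZ {T : X ≃ₜ X} {M : ℝ} (hM : (M : EReal) < htopZ T) :
    ∃ ε : ℝ, 0 < ε ∧ ∃ᶠ n : ℕ in atTop,
      M * n < Real.log (spaZ T (Finset.Icc 0 ((n : ℤ) - 1)) ε) := by
  obtain ⟨ε, hM⟩ := lt_iSup_iff.1 hM
  obtain ⟨hε, hM⟩ := lt_iSup_iff.1 hM
  refine ⟨ε, hε, ?_⟩
  refine ((frequently_lt_of_lt_limsup (by isBoundedDefault) hM).and_eventually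
    (eventually_gt_atTop 0)).mono fun n ⟨hn, hn0⟩ => ?_
  exact (lt_div_iff₀ (Nat.cast_pos.2 hn0)).1 (EReal.coe_lt_coe_iff.1 hn)

open Pointwise in
lemma exists_card_Icc_sub_le (F : Finset ℤ) :
    ∃ L : ℕ, ∀ n : ℕ, (Finset.Icc 0 ((n : ℤ) - 1) - F).card ≤ n + L := by
  obtain ⟨a, ha⟩ := F.bddBelow
  obtain ⟨b, hb⟩ := F.bddAbove
  refine ⟨(b - a).toNat, fun n => ?_⟩
  calc (Finset.Icc 0 ((n : ℤ) - 1) - F).card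
    _ ≤ (Finset.Icc (-b) (n - 1 - a)).card := by
      refine Finset.card_le_card (Finset.sub_subset_iff.2 fun i hi j hj => ?_)
      have := ha hj
      have := hb hj
      rw [Finset.mem_Icc] at hi ⊢
      omega
    _ ≤ n + (b - a).toNat := by
      rw [Int.card_Icc]
      omega

lemma le_of_frequently_mul_le_mul_add {a b c : ℝ} (h : ∃ᶠ n : ℕ in atTop, a * n ≤ b * n + c) :
    a ≤ b := by
  by_contra! hab
  have hlim : Tendsto (fun n : ℕ => (a - b) * n) atTop atTop :=
    tendsto_natCast_atTop_atTop.const_mul_atTop (sub_pos.2 hab)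
  obtain ⟨n, hn, hn'⟩ := (h.and_eventually (hlim.eventually_gt_atTop c)).exists
  linarith

theorem exists_card_mul_le_log_spaZ [CompactSpace X] [Nonempty X] {T : X ≃ₜ X} {a : ℝ}
    (ha : ((a + 2 * Real.log 2 : ℝ) : EReal) < htopZ T) :
    ∃ δ : ℝ, 0 < δ ∧ ∀ F : Finset ℤ, F.card * a ≤ Real.log (spaZ T F δ) := by
  obtain ⟨ε, hε, hfreq⟩ := frequently_lt_log_spaZ_of_lt_htopZ ha
  obtain ⟨δ, C, hδ, h⟩ := exists_card_mul_log_spaZ_sub_le T hε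
  refine ⟨δ, hδ, fun F => ?_⟩
  obtain ⟨L, hL⟩ := exists_card_Icc_sub_le F
  set K := Real.log (spaZ T F δ) + F.card * Real.log 2
  suffices F.card * (a + Real.log 2) ≤ K by linarith
  refine le_of_frequently_mul_le_mul_add (c := L * K + F.card * C) (hfreq.mono fun n hn => ?_)
  have hcount : F.card * ((a + 2 * Real.log 2) * n - C - n * Real.log 2) ≤ (n + L) * K :=
    calc _ ≤ F.card * (Real.log (spaZ T (Finset.Icc 0 ((n : ℤ) - 1)) ε) - C -
            (Finset.Icc 0 ((n : ℤ) - 1)).card * Real.log 2) := by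
          rw [Int.card_Icc, show ((n : ℤ) - 1 + 1 - 0).toNat = n by omega]
          gcongr
      _ ≤ _ := h _ F
      _ ≤ (n + L) * K := by
          gcongr
          exact_mod_cast hL n
  linarith

open Pointwise in
theorem stmt11_general [CompactSpace X] [Nonempty X] (T : X ≃ₜ X) (m : ℕ) {N : ℝ}
    (hN : ((N + 2 * Real.log 2 : ℝ) : EReal) < htopZ T) :
    ∃ δ : ℝ, 0 < δ ∧
      ∀ F : Finset ℤ, Cm m F * N ≤ Real.log (spaZ T F δ) / (F.card : ℝ) := by
  obtain ⟨ε, hε, hentropy⟩ := exists_card_mul_le_log_spaZ hN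
  obtain ⟨δ, hδ, hspa⟩ := exists_spaZ_add_le T (Finset.Icc 0 ((m : ℤ) - 1)) hε
  refine ⟨δ, hδ, fun F => ?_⟩
  have hpos := spaZ_pos T (F + Finset.Icc 0 ((m : ℤ) - 1)) hε
  rw [Cm, div_mul_eq_mul_div]
  gcongr
  exact (hentropy _).trans 
    (Real.log_le_log (Nat.cast_pos.2 hpos) (Nat.cast_le.2 (hspa F)))

end Entropy

/-- Let `T` be a homeomorphism of a compact metric space with infinite
topological entropy and fix `m ≥ 1`. Then for every `N ∈ ℕ` there is `δ > 0` such that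
`C_m(F)·N ≤ (1/|F|) log spa(T,F,δ)` for every finite `F ⊆ ℤ`. -/
theorem stmt11 [CompactSpace X] [Nonempty X] (T : X ≃ₜ X) (m : ℕ) (hm : 1 ≤ m)
    (hinf : htopZ T = ⊤) (N : ℕ) :
    ∃ δ : ℝ, 0 < δ ∧
      ∀ F : Finset ℤ, Cm m F * (N : ℝ) ≤ Real.log (spaZ T F δ) / (F.card : ℝ) :=
  stmt11_general T m (hinf ▸ EReal.coe_lt_top _)
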